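/- arXiv:1308.3072 — 2 statements merged into one kernel-verified Lean document; each statement's English description precedes it below -/
import Mathlib

section
/- Let D > 0 and set N := ⌊2D·max{κ_s, κ_p}·e²⌋. Then for all x, y ∈ ℝ³ with 0 < |x−y| ≤ D, the operator norm of the Kupradze matrix satisfies ‖Γ^ω(x,y)‖ ≤ (1/(4π))·[ C₇/|x−y| + C₈ ], where C₇ := 1/c_s² + 2/c_p² and C₈ := 2(κ_s/c_s²)·( Σ_{l=0}^{N−1} (κ_s D/2)^l + 2^{1−N} ) + (κ_p/c_p²)·( Σ_{l=0}^{N−1} (κ_p D/2)^l + 2^{1−N} ). -/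
noncomputable section
open Real

abbrev E3 := EuclideanSpace ℝ (Fin 3)

/-- Free-space fundamental solution of the Helmholtz equation. -/
def Phi (κ : ℝ) (x y : E3) : ℂ :=
  Complex.exp (Complex.I * κ * ‖x - y‖) / (4 * Real.pi * ‖x - y‖)

/-- Phase velocity `c_s = √μ`. -/
def cS (mu : ℝ) : ℝ := Real.sqrt mu

/-- Phase velocity `c_p = √(λ+2μ)`. -/
def cP (lam mu : ℝ) : ℝ := Real.sqrt (lam + 2 * mu)

/-- Transversal wavenumber `κ_s = ω/c_s`. -/
def kappaS (mu om : ℝ) : ℝ := om / cS mu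

/-- Longitudinal wavenumber `κ_p = ω/c_p`. -/
def kappaP (lam mu om : ℝ) : ℝ := om / cP lam mu

/-- The Kupradze matrix of the fundamental solution of the Navier equation. -/
def Gamma (lam mu om : ℝ) (x y : E3) (i j : Fin 3) : ℂ :=
  (1 / (mu : ℂ)) * Phi (kappaS mu om) x y * (if i = j then 1 else 0)
  + (1 / (om : ℂ) ^ 2) *
      fderiv ℝ
        (fun x' : E3 =>
          fderiv ℝ
            (fun x'' : E3 => Phi (kappaS mu om) x'' y - Phi (kappaP lam mu om) x'' y)
            x' (EuclideanSpace.single j 1))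
        x (EuclideanSpace.single i 1)

/-- The `3×3` Kupradze matrix `Γ^ω(x,y)`. -/
def GammaMat (lam mu om : ℝ) (x y : E3) : Matrix (Fin 3) (Fin 3) ℂ :=
  Matrix.of fun i j => Gamma lam mu om x y i j

/-- Operator norm of a `3×3` complex matrix with respect to Euclidean norms. -/
def opNorm3 (A : Matrix (Fin 3) (Fin 3) ℂ) : ℝ :=
  ‖LinearMap.toContinuousLinearMap (Matrix.toEuclideanLin A)‖

/-- `N := ⌊2D·max{κ_s,κ_p}·e²⌋`. -/
def NOm (lam mu om D : ℝ) : ℕ :=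
  Nat.floor (2 * D * max (kappaS mu om) (kappaP lam mu om) * Real.exp 1 ^ 2)

/-!
Write `u = (x - y) / |x - y|` and `r = |x - y|`. Differences of radial Helmholtz solutions are
radial, so `Γ` acts as a scalar `α` on `uᗮ` and as a scalar `β` on the line through `u`, and
`‖Γ‖ ≤ max |α| |β|`. The radial Helmholtz equation eliminates second derivatives: up to
the factor `1 / (4πr)`, and with `g t = (it - 1) exp (it)`,

* `α = exp (iκ_s r) / c_s² + (g (κ_s r) - g (κ_p r)) / (ωr)²`,
* `β = exp (iκ_p r) / c_p² - 2 (g (κ_s r) - g (κ_p r)) / (ωr)²`.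

Since `g' t = -t exp (it)`, the apparent `r⁻³` singularity cancels:
`|g a - g b| ≤ |a² - b²| / 2`. This alone bounds `β` by `C₇ / r`. For `α` it could give the
`1 / c_s²` term a factor of up to `3 / 2`; the second-order expansion
`|g t + t² / 2 · exp (it) + 1| ≤ t³ / 6` removes the excess at the cost of a bounded term.
-/

section RadialFunctions

open scoped InnerProductSpace

variable {E F : Type*} [NormedAddCommGroup E] [InnerProductSpace ℝ E]
  [NormedAddCommGroup F] [NormedSpace ℝ F]

lemma hasFDerivAt_norm {x : E} (hx : x ≠ 0) :
    HasFDerivAt (fun z : E => ‖z‖) (‖x‖⁻¹ • innerSL ℝ x) x := by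
  have hsqrt := (hasStrictFDerivAt_norm_sq x).hasFDerivAt.sqrt (by simpa using hx)
  simp only [Real.sqrt_sq (norm_nonneg _)] at hsqrt
  convert hsqrt using 1
  rw [← Nat.cast_smul_eq_nsmul ℝ, smul_smul]
  congr 1
  have := norm_ne_zero_iff.2 hx
  push_cast
  field_simp

lemma hasFDerivAt_comp_norm {φ : ℝ → F} {d : F} {x : E} (hx : x ≠ 0)
    (hφ : HasDerivAt φ d ‖x‖) :
    HasFDerivAt (fun z : E => φ ‖z‖) ((‖x‖⁻¹ • innerSL ℝ x).smulRight d) x := by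
  refine (hφ.hasFDerivAt.comp x (hasFDerivAt_norm hx)).congr_fderiv ?_
  ext v
  simp [smul_smul]

lemma fderiv_fderiv_comp_norm {φ φ' : ℝ → F} {d : F} {x : E} (hx : x ≠ 0)
    (hφ : ∀ᶠ ρ in nhds ‖x‖, HasDerivAt φ (φ' ρ) ρ) (hφ' : HasDerivAt φ' d ‖x‖) (v w : E) :
    fderiv ℝ (fun z => fderiv ℝ (fun z' : E => φ ‖z'‖) z w) x v
      = (‖x‖⁻¹ * (⟪v, w⟫_ℝ - ⟪‖x‖⁻¹ • x, v⟫_ℝ * ⟪‖x‖⁻¹ • x, w⟫_ℝ)) • φ' ‖x‖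
        + (⟪‖x‖⁻¹ • x, v⟫_ℝ * ⟪‖x‖⁻¹ • x, w⟫_ℝ) • d := by
  have hr : ‖x‖ ≠ 0 := norm_ne_zero_iff.2 hx
  have hgrad : (fun z => fderiv ℝ (fun z' : E => φ ‖z'‖) z w)
      =ᶠ[nhds x] fun z => innerSL ℝ w z • (‖z‖⁻¹ • φ' ‖z‖) := by
    filter_upwards [isOpen_ne.mem_nhds hx, continuous_norm.continuousAt.eventually hφ]
      with z hz hφz
    rw [(hasFDerivAt_comp_norm hz hφz).fderiv]
    simp [smul_smul, mul_comm, real_inner_comm]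
  have hprod := (innerSL ℝ w).hasFDerivAt.fun_smul
    (hasFDerivAt_comp_norm hx ((hasDerivAt_inv hr).fun_smul hφ'))
  rw [hgrad.fderiv_eq, hprod.fderiv]
  simp only [add_apply, smul_apply, ContinuousLinearMap.smulRight_apply, innerSL_apply_apply,
    real_inner_smul_left, smul_eq_mul, real_inner_comm x w, real_inner_comm v w]
  match_scalars <;> field_simp
  ring

end RadialFunctions

section OperatorNorm

open InnerProductSpace

variable {𝕜 : Type*} [RCLike 𝕜]

lemma norm_smul_starProjection_orthogonal_add_le {E : Type*} [NormedAddCommGroup E]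
    [InnerProductSpace 𝕜 E] (K : Submodule 𝕜 E) [K.HasOrthogonalProjection] (α β : 𝕜) :
    ‖α • Kᗮ.starProjection + β • K.starProjection‖ ≤ max ‖α‖ ‖β‖ := by
  refine ContinuousLinearMap.opNorm_le_bound _ (by positivity) fun v => ?_
  have hidem : K.starProjection (K.starProjection v) = K.starProjection v :=
    Submodule.starProjection_eq_self_iff.2 (K.starProjection_apply_mem v)
  refine le_of_sq_le_sq ?_ (by positivity)
  calc ‖(α • Kᗮ.starProjection + β • K.starProjection) v‖ ^ 2
      = ‖β‖ ^ 2 * ‖K.starProjection v‖ ^ 2 + ‖α‖ ^ 2 * ‖Kᗮ.starProjection v‖ ^ 2 := by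
        rw [K.norm_sq_eq_add_norm_sq_starProjection]
        simp [hidem, Submodule.starProjection_orthogonal_val, norm_smul, mul_pow]
    _ ≤ max ‖α‖ ‖β‖ ^ 2 * ‖K.starProjection v‖ ^ 2
          + max ‖α‖ ‖β‖ ^ 2 * ‖Kᗮ.starProjection v‖ ^ 2 := by
        gcongr
        exacts [le_max_right _ _, le_max_left _ _]
    _ = (max ‖α‖ ‖β‖ * ‖v‖) ^ 2 := by
        rw [mul_pow, K.norm_sq_eq_add_norm_sq_starProjection v]
        ring

lemma norm_toEuclideanLin_one_sub_vecMulVec_le {ι : Type*} [Fintype ι] [DecidableEq ι]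
    {u : EuclideanSpace 𝕜 ι} (hu : ‖u‖ = 1) (α β : 𝕜) :
    ‖LinearMap.toContinuousLinearMap (Matrix.toEuclideanLin
      (α • (1 - Matrix.vecMulVec u (star u)) + β • Matrix.vecMulVec u (star u)))‖
      ≤ max ‖α‖ ‖β‖ := by
  convert norm_smul_starProjection_orthogonal_add_le (𝕜 ∙ u) α β using 2
  ext1 v
  simp [← symm_toEuclideanLin_rankOne, Submodule.starProjection_orthogonal_val,
    Submodule.starProjection_unit_singleton 𝕜 hu]

end OperatorNorm

lemma norm_sub_le_of_norm_deriv_le_deriv {E : Type*} [NormedAddCommGroup E] [NormedSpace ℝ E]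
    {f f' : ℝ → E} {B B' : ℝ → ℝ} {a b : ℝ} (hab : a ≤ b)
    (hf : ∀ t ∈ Set.Icc a b, HasDerivAt f (f' t) t)
    (hB : ∀ t ∈ Set.Icc a b, HasDerivAt B (B' t) t)
    (hle : ∀ t ∈ Set.Ico a b, ‖f' t‖ ≤ B' t) :
    ‖f b - f a‖ ≤ B b - B a :=
  image_norm_le_of_norm_deriv_right_le_deriv_boundary'
    (f := fun t => f t - f a) (B := fun t => B t - B a)
    (fun t ht => ((hf t ht).sub_const _).continuousAt.continuousWithinAt)
    (fun t ht => ((hf t (Set.Ico_subset_Icc_self ht)).sub_const _).hasDerivWithinAt)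
    (by simp)
    (fun t ht => ((hB t ht).sub_const _).continuousAt.continuousWithinAt)
    (fun t ht => ((hB t (Set.Ico_subset_Icc_self ht)).sub_const _).hasDerivWithinAt)
    hle (Set.right_mem_Icc.2 hab)

section SphericalWave

/-- The radial profile `exp(iκr)/(4πr)` of the outgoing spherical wave `Phi κ`. -/
def sphericalWave (κ r : ℝ) : ℂ := Complex.exp (Complex.I * (κ * r : ℝ)) / (4 * π * r)

/-- The flux of `sphericalWave κ` through the sphere of radius `r`, that is
`4πr²` times its radial derivative, as a function of the phase `t = κr`. -/
def sphericalFlux (t : ℝ) : ℂ := (Complex.I * t - 1) * Complex.exp (Complex.I * t)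

/-- The derivative of `sphericalWave κ` with respect to the radius. -/
def sphericalWaveDeriv (κ r : ℝ) : ℂ := sphericalFlux (κ * r) / (4 * π * (r : ℂ) ^ 2)

lemma Phi_eq_sphericalWave (κ : ℝ) (x y : E3) : Phi κ x y = sphericalWave κ ‖x - y‖ := by
  simp [Phi, sphericalWave, mul_assoc]

lemma hasDerivAt_exp_I_mul_ofReal (t : ℝ) :
    HasDerivAt (fun s : ℝ => Complex.exp (Complex.I * s))
      (Complex.exp (Complex.I * t) * Complex.I) t := by
  simpa using ((hasDerivAt_id t).ofReal_comp.const_mul Complex.I).cexp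

lemma hasDerivAt_sphericalFlux (t : ℝ) :
    HasDerivAt sphericalFlux (-t * Complex.exp (Complex.I * t)) t := by
  have hlin : HasDerivAt (fun s : ℝ => Complex.I * (s : ℂ) - 1) Complex.I t := by
    simpa using ((hasDerivAt_id t).ofReal_comp.const_mul Complex.I).sub_const 1
  refine (hlin.mul (hasDerivAt_exp_I_mul_ofReal t)).congr_deriv ?_
  linear_combination (t * Complex.exp (Complex.I * t)) * Complex.I_sq

@[simp] lemma sphericalFlux_zero : sphericalFlux 0 = -1 := by simp [sphericalFlux]

lemma norm_sphericalFlux_sub_le {a b : ℝ} (ha : 0 ≤ a) (hb : 0 ≤ b) :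
    ‖sphericalFlux a - sphericalFlux b‖ ≤ |a ^ 2 - b ^ 2| / 2 := by
  wlog hba : b ≤ a generalizing a b
  · rw [norm_sub_rev, abs_sub_comm]
    exact this hb ha (le_of_not_ge hba)
  have hsq : b ^ 2 ≤ a ^ 2 := by gcongr
  rw [abs_of_nonneg (sub_nonneg.2 hsq), sub_div]
  refine norm_sub_le_of_norm_deriv_le_deriv hba (B := fun t => t ^ 2 / 2) (B' := id)
    (fun t _ => hasDerivAt_sphericalFlux t) (fun t _ => ?_) (fun t ht => ?_)
  · simpa using (hasDerivAt_pow 2 t).div_const 2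
  · simp [abs_of_nonneg (hb.trans ht.1)]

lemma norm_sphericalFlux_add_le {t : ℝ} (ht : 0 ≤ t) :
    ‖sphericalFlux t + t ^ 2 / 2 * Complex.exp (Complex.I * t) + 1‖ ≤ t ^ 3 / 6 := by
  have hderiv (s : ℝ) : HasDerivAt
      (fun s : ℝ => sphericalFlux s + (s : ℂ) ^ 2 / 2 * Complex.exp (Complex.I * s))
      (s ^ 2 / 2 * Complex.exp (Complex.I * s) * Complex.I) s := by
    have hsq : HasDerivAt (fun s : ℝ => (s : ℂ) ^ 2 / 2) (s : ℂ) s := by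
      simpa using ((hasDerivAt_id s).ofReal_comp.pow 2).div_const 2
    refine ((hasDerivAt_sphericalFlux s).add
      (hsq.mul (hasDerivAt_exp_I_mul_ofReal s))).congr_deriv ?_
    ring
  have hbound := norm_sub_le_of_norm_deriv_le_deriv ht (fun s _ => hderiv s)
    (B := fun s => s ^ 3 / 6) (B' := fun s => s ^ 2 / 2)
    (fun s _ => ((hasDerivAt_pow 3 s).div_const 6).congr_deriv (by norm_num; ring))
    (fun s _ => by simp)
  simpa using hbound

lemma hasDerivAt_sphericalWave (κ : ℝ) {r : ℝ} (hr : r ≠ 0) :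
    HasDerivAt (sphericalWave κ) (sphericalWaveDeriv κ r) r := by
  have hrc : (r : ℂ) ≠ 0 := by exact_mod_cast hr
  have hexp := (hasDerivAt_exp_I_mul_ofReal (κ * r)).scomp r ((hasDerivAt_id r).const_mul κ)
  have hden : HasDerivAt (fun s : ℝ => 4 * (π : ℂ) * s) (4 * π) r := by
    simpa using (hasDerivAt_id r).ofReal_comp.const_mul (4 * (π : ℂ))
  refine (hexp.div hden (by simp [hrc, Real.pi_ne_zero])).congr_deriv ?_
  have hπ : (π : ℂ) ≠ 0 := by exact_mod_cast Real.pi_ne_zero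
  simp only [sphericalWaveDeriv, sphericalFlux, Complex.real_smul, Function.comp_apply]
  push_cast
  field_simp

lemma hasDerivAt_sphericalWaveDeriv (κ : ℝ) {r : ℝ} (hr : r ≠ 0) :
    HasDerivAt (sphericalWaveDeriv κ)
      (-(2 / r) * sphericalWaveDeriv κ r - κ ^ 2 * sphericalWave κ r) r := by
  have hrc : (r : ℂ) ≠ 0 := by exact_mod_cast hr
  have hflux := (hasDerivAt_sphericalFlux (κ * r)).scomp r ((hasDerivAt_id r).const_mul κ)
  have hden : HasDerivAt (fun s : ℝ => 4 * (π : ℂ) * (s : ℂ) ^ 2) (4 * (π : ℂ) * (2 * r)) r := by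
    simpa using ((hasDerivAt_id r).ofReal_comp.pow 2).const_mul (4 * (π : ℂ))
  refine (hflux.div hden (by simp [hrc, Real.pi_ne_zero])).congr_deriv ?_
  have hπ : (π : ℂ) ≠ 0 := by exact_mod_cast Real.pi_ne_zero
  simp only [sphericalWaveDeriv, sphericalWave, Complex.real_smul, Function.comp_apply]
  push_cast
  field_simp
  ring

end SphericalWave

section Kupradze

/-- The factor by which the Kupradze matrix with wave speeds `cs` and `cp` acts on vectors
orthogonal to `x - y`, where `r = ‖x - y‖`. -/
def transverseEigenvalue (cs cp ω r : ℝ) : ℂ :=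
  (Complex.exp (Complex.I * (ω / cs * r : ℝ)) / cs ^ 2
    + (sphericalFlux (ω / cs * r) - sphericalFlux (ω / cp * r)) / (ω * r) ^ 2) / (4 * π * r)

/-- The factor by which the Kupradze matrix with wave speeds `cs` and `cp` acts on multiples
of `x - y`, where `r = ‖x - y‖`. -/
def longitudinalEigenvalue (cs cp ω r : ℝ) : ℂ :=
  (Complex.exp (Complex.I * (ω / cp * r : ℝ)) / cp ^ 2
    - 2 * ((sphericalFlux (ω / cs * r) - sphericalFlux (ω / cp * r)) / (ω * r) ^ 2))
    / (4 * π * r)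

/-- The unit vector `(x - y) / ‖x - y‖`, with complex scalars so that complex matrices act on it. -/
def unitDirection (x y : E3) : EuclideanSpace ℂ (Fin 3) :=
  WithLp.toLp 2 fun i => (((x - y) i / ‖x - y‖ : ℝ) : ℂ)

lemma norm_unitDirection {x y : E3} (hxy : x ≠ y) : ‖unitDirection x y‖ = 1 := by
  have hr : ‖x - y‖ ≠ 0 := norm_ne_zero_iff.2 (sub_ne_zero.2 hxy)
  rw [← sq_eq_sq₀ (norm_nonneg _) zero_le_one, EuclideanSpace.norm_sq_eq]
  simp only [unitDirection, Complex.norm_real, Real.norm_eq_abs, sq_abs, div_pow]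
  rw [← Finset.sum_div, ← EuclideanSpace.real_norm_sq_eq, one_pow, div_self (pow_ne_zero 2 hr)]

lemma fderiv_fderiv_Phi_sub_Phi (κ κ' : ℝ) {x y : E3} (hxy : x ≠ y) (i j : Fin 3) :
    fderiv ℝ (fun x' : E3 => fderiv ℝ (fun x'' : E3 => Phi κ x'' y - Phi κ' x'' y) x'
        (EuclideanSpace.single j 1)) x (EuclideanSpace.single i 1)
      = ((1 : Matrix (Fin 3) (Fin 3) ℂ) i j - unitDirection x y i * unitDirection x y j)
          * ((sphericalWaveDeriv κ ‖x - y‖ - sphericalWaveDeriv κ' ‖x - y‖) / ‖x - y‖)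
        + unitDirection x y i * unitDirection x y j
          * ((-(2 / ‖x - y‖) * sphericalWaveDeriv κ ‖x - y‖
                - κ ^ 2 * sphericalWave κ ‖x - y‖)
            - (-(2 / ‖x - y‖) * sphericalWaveDeriv κ' ‖x - y‖
                - κ' ^ 2 * sphericalWave κ' ‖x - y‖)) := by
  have hx : x - y ≠ 0 := sub_ne_zero.2 hxy
  have hr : ‖x - y‖ ≠ 0 := norm_ne_zero_iff.2 hx
  have hrad := fderiv_fderiv_comp_norm hx
    (φ := fun r => sphericalWave κ r - sphericalWave κ' r)
    (φ' := fun r => sphericalWaveDeriv κ r - sphericalWaveDeriv κ' r)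
    ((isOpen_ne.eventually_mem hr).mono fun r hr =>
      (hasDerivAt_sphericalWave κ hr).sub (hasDerivAt_sphericalWave κ' hr))
    ((hasDerivAt_sphericalWaveDeriv κ hr).sub (hasDerivAt_sphericalWaveDeriv κ' hr))
    (EuclideanSpace.single i 1) (EuclideanSpace.single j 1)
  simp only [Phi_eq_sphericalWave,
    fderiv_comp_sub (f := fun z : E3 => sphericalWave κ ‖z‖ - sphericalWave κ' ‖z‖)]
  rw [fderiv_comp_sub (f := fun z => fderiv ℝ
    (fun z : E3 => sphericalWave κ ‖z‖ - sphericalWave κ' ‖z‖) z (EuclideanSpace.single j 1)), hrad]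
  have hcoord (k : Fin 3) :
      ((inner ℝ (‖x - y‖⁻¹ • (x - y)) (EuclideanSpace.single k 1) : ℝ) : ℂ)
        = unitDirection x y k := by
    simp [unitDirection, EuclideanSpace.inner_single_right, div_eq_inv_mul]
  have hbasis : ((inner ℝ (EuclideanSpace.single i 1 : E3) (EuclideanSpace.single j 1) : ℝ) : ℂ)
      = (1 : Matrix (Fin 3) (Fin 3) ℂ) i j := by
    simp [EuclideanSpace.inner_single_left, Matrix.one_apply, apply_ite]
  simp only [Complex.real_smul, Complex.ofReal_mul, Complex.ofReal_sub, Complex.ofReal_inv,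
    hcoord, hbasis]
  ring

variable {lam mu om : ℝ} {x y : E3}

lemma cS_sq (hmu : 0 ≤ mu) : cS mu ^ 2 = mu := Real.sq_sqrt hmu

lemma GammaMat_eq_transverse_add_longitudinal (hmu : 0 < mu) (hL : 0 < lam + 2 * mu)
    (hom : om ≠ 0) (hxy : x ≠ y) :
    GammaMat lam mu om x y
      = transverseEigenvalue (cS mu) (cP lam mu) om ‖x - y‖
          • (1 - Matrix.vecMulVec (unitDirection x y) (star (unitDirection x y)))
        + longitudinalEigenvalue (cS mu) (cP lam mu) om ‖x - y‖
          • Matrix.vecMulVec (unitDirection x y) (star (unitDirection x y)) := by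
  have hcs : (cS mu : ℂ) ≠ 0 := by exact_mod_cast (Real.sqrt_pos.2 hmu).ne'
  have hcp : (cP lam mu : ℂ) ≠ 0 := by exact_mod_cast (Real.sqrt_pos.2 hL).ne'
  have hcs_sq : (mu : ℂ) = cS mu ^ 2 := by exact_mod_cast (cS_sq hmu.le).symm
  have hr : (‖x - y‖ : ℂ) ≠ 0 := by exact_mod_cast norm_ne_zero_iff.2 (sub_ne_zero.2 hxy)
  have hω : (om : ℂ) ≠ 0 := by exact_mod_cast hom
  have hreal (i : Fin 3) : star (unitDirection x y i) = unitDirection x y i :=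
    Complex.conj_ofReal _
  ext i j
  rw [GammaMat, Matrix.of_apply, _root_.Gamma, fderiv_fderiv_Phi_sub_Phi _ _ hxy,
    Phi_eq_sphericalWave, hcs_sq, ← Matrix.one_apply]
  simp only [Matrix.add_apply, Matrix.smul_apply, Matrix.sub_apply, Matrix.vecMulVec_apply,
    Pi.star_apply, hreal, smul_eq_mul]
  simp only [transverseEigenvalue, longitudinalEigenvalue, sphericalWave, sphericalWaveDeriv,
    kappaS, kappaP]
  push_cast
  field_simp
  ring

section Bounds

variable {cs cp ω r : ℝ}

lemma norm_sphericalFlux_sub_div_le {κ κ' : ℝ} (hκ : 0 ≤ κ) (hκ' : 0 ≤ κ') (ω : ℝ) (hr : 0 < r) :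
    ‖(sphericalFlux (κ * r) - sphericalFlux (κ' * r)) / (ω * r) ^ 2‖
      ≤ |κ ^ 2 - κ' ^ 2| / (2 * ω ^ 2) := by
  have hflux := norm_sphericalFlux_sub_le (mul_nonneg hκ hr.le) (mul_nonneg hκ' hr.le)
  rw [mul_pow, mul_pow, ← sub_mul, abs_mul, abs_of_nonneg (sq_nonneg r)] at hflux
  calc _ ≤ |κ ^ 2 - κ' ^ 2| * r ^ 2 / 2 / (ω * r) ^ 2 := by
        simpa [mul_pow] using div_le_div_of_nonneg_right hflux (sq_nonneg (ω * r))
    _ = |κ ^ 2 - κ' ^ 2| / (2 * ω ^ 2) := by field_simp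

lemma norm_sphericalFlux_add_div_le {κ : ℝ} (hκ : 0 ≤ κ) (ω : ℝ) (hr : 0 < r) :
    ‖(sphericalFlux (κ * r) + (κ * r : ℝ) ^ 2 / 2 * Complex.exp (Complex.I * (κ * r : ℝ)) + 1)
        / (ω * r) ^ 2‖
      ≤ κ ^ 3 * r / (6 * ω ^ 2) := by
  calc _ ≤ (κ * r) ^ 3 / 6 / (ω * r) ^ 2 := by
        simpa [mul_pow] using div_le_div_of_nonneg_right
          (norm_sphericalFlux_add_le (mul_nonneg hκ hr.le)) (sq_nonneg (ω * r))
    _ = κ ^ 3 * r / (6 * ω ^ 2) := by field_simp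

/-- Expanding only the shear flux to second order leaves half of `exp(iκ_s r) / c_s²`; the
pressure flux is compared with its value at `0`. -/
lemma transverseEigenvalue_eq_expansion (cs cp : ℝ) (hω : ω ≠ 0) (hr : r ≠ 0) :
    transverseEigenvalue cs cp ω r
      = (Complex.exp (Complex.I * (ω / cs * r : ℝ)) / (2 * cs ^ 2)
        + (sphericalFlux (ω / cs * r) + (ω / cs * r : ℝ) ^ 2 / 2
            * Complex.exp (Complex.I * (ω / cs * r : ℝ)) + 1) / (ω * r) ^ 2
        - (sphericalFlux (ω / cp * r) - sphericalFlux (0 * r)) / (ω * r) ^ 2) / (4 * π * r) := by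
  have hωc : (ω : ℂ) ≠ 0 := by exact_mod_cast hω
  have hrc : (r : ℂ) ≠ 0 := by exact_mod_cast hr
  have hphase : ((ω / cs * r : ℝ) : ℂ) ^ 2 / (ω * r) ^ 2 = 1 / cs ^ 2 := by
    push_cast
    field_simp
  rw [transverseEigenvalue, zero_mul, sphericalFlux_zero]
  linear_combination
    (-Complex.exp (Complex.I * (ω / cs * r : ℝ)) / 2 / (4 * π * r)) * hphase

lemma norm_transverseEigenvalue_le (hcs : 0 < cs) (hcp : 0 < cp) (hω : 0 < ω) (hr : 0 < r) :
    ‖transverseEigenvalue cs cp ω r‖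
      ≤ 1 / (4 * π) * ((1 / cs ^ 2 + 1 / cp ^ 2) / 2 / r + ω / cs / (6 * cs ^ 2)) := by
  have hshear := norm_sphericalFlux_add_div_le (div_pos hω hcs).le ω hr
  have hpressure := norm_sphericalFlux_sub_div_le (div_pos hω hcp).le le_rfl ω hr
  have hpow : |(ω / cp) ^ 2 - 0 ^ 2| = (ω / cp) ^ 2 := by simp
  rw [hpow] at hpressure
  calc ‖transverseEigenvalue cs cp ω r‖
      ≤ (1 / (2 * cs ^ 2) + (ω / cs) ^ 3 * r / (6 * ω ^ 2) + (ω / cp) ^ 2 / (2 * ω ^ 2))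
          / (4 * π * r) := by
        rw [transverseEigenvalue_eq_expansion cs cp hω.ne' hr.ne', norm_div]
        gcongr ?_ / ?_
        · refine norm_sub_le_of_le (norm_add_le_of_le ?_ hshear) hpressure
          simp [Complex.norm_exp_I_mul_ofReal, -Complex.ofReal_mul, -Complex.ofReal_div]
        · simp [abs_of_pos hr, abs_of_pos Real.pi_pos]
    _ = _ := by
        field_simp
        ring

lemma norm_longitudinalEigenvalue_le (hcs : 0 < cs) (hcp : 0 < cp) (hω : 0 < ω) (hr : 0 < r) :
    ‖longitudinalEigenvalue cs cp ω r‖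
      ≤ 1 / (4 * π) * ((1 / cs ^ 2 + 2 / cp ^ 2) / r) := by
  have hflux := norm_sphericalFlux_sub_div_le (div_pos hω hcs).le (div_pos hω hcp).le ω hr
  calc ‖longitudinalEigenvalue cs cp ω r‖
      ≤ (1 / cp ^ 2 + 2 * (((ω / cs) ^ 2 + (ω / cp) ^ 2) / (2 * ω ^ 2))) / (4 * π * r) := by
        rw [longitudinalEigenvalue, norm_div]
        gcongr ?_ / ?_
        · refine norm_sub_le_of_le ?_ ?_
          · simp [Complex.norm_exp_I_mul_ofReal, -Complex.ofReal_mul, -Complex.ofReal_div]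
          · rw [norm_mul, RCLike.norm_ofNat]
            gcongr
            refine hflux.trans ?_
            gcongr
            exact (abs_sub _ _).trans_eq (by simp only [abs_of_nonneg, sq_nonneg])
        · simp [abs_of_pos hr, abs_of_pos Real.pi_pos]
    _ = _ := by
        field_simp
        ring

end Bounds

end Kupradze

lemma one_le_geom_sum_add_zpow {q : ℝ} (hq : 0 ≤ q) (N : ℕ) :
    1 ≤ ∑ l ∈ Finset.range N, q ^ l + (2 : ℝ) ^ ((1 : ℤ) - N) := by
  cases N with
  | zero => norm_num
  | succ n =>
    rw [Finset.sum_range_succ', pow_zero]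
    have : 0 ≤ ∑ l ∈ Finset.range n, q ^ (l + 1) := by positivity
    have : (0 : ℝ) < 2 ^ ((1 : ℤ) - (n + 1 : ℕ)) := by positivity
    linarith

theorem gamma_opNorm_bound_general (lam mu om : ℝ) (hmu : 0 < mu) (hL : 0 < lam + 2 * mu)
    (hom : 0 < om) (x y : E3) (hxy : x ≠ y) :
    opNorm3 (GammaMat lam mu om x y)
      ≤ 1 / (4 * π) * ((1 / cS mu ^ 2 + 2 / cP lam mu ^ 2) / ‖x - y‖
          + kappaS mu om / (6 * cS mu ^ 2)) := by
  have hcs : 0 < cS mu := Real.sqrt_pos.2 hmu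
  have hcp : 0 < cP lam mu := Real.sqrt_pos.2 hL
  have hr : 0 < ‖x - y‖ := norm_pos_iff.2 (sub_ne_zero.2 hxy)
  have hκs : 0 < kappaS mu om := div_pos hom hcs
  rw [GammaMat_eq_transverse_add_longitudinal hmu hL hom.ne' hxy]
  refine (norm_toEuclideanLin_one_sub_vecMulVec_le (norm_unitDirection hxy) _ _).trans
    (max_le ((norm_transverseEigenvalue_le hcs hcp hom hr).trans ?_)
      ((norm_longitudinalEigenvalue_le hcs hcp hom hr).trans ?_))
  · rw [← kappaS]
    gcongr
    refine (half_le_self (by positivity)).trans ?_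
    gcongr
    norm_num
  · gcongr
    exact le_add_of_nonneg_right (by positivity)

/-- The estimate (modgamma): for `0 < |x−y| ≤ D`,
`‖Γ^ω(x,y)‖ ≤ (1/(4π))(C₇/|x−y| + C₈)` with
`C₇ = 1/c_s² + 2/c_p²` and
`C₈ = 2(κ_s/c_s²)(Σ_{l<N}(κ_s D/2)^l + 2^{1−N}) + (κ_p/c_p²)(Σ_{l<N}(κ_p D/2)^l + 2^{1−N})`. -/
theorem gamma_opNorm_bound (lam mu om D : ℝ) (hmu : 0 < mu)
    (hlm : 0 < 3 * lam + 2 * mu) (hom : 0 < om) (hD : 0 < D)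
    (x y : E3) (hxy : x ≠ y) (hle : ‖x - y‖ ≤ D) :
    opNorm3 (GammaMat lam mu om x y)
      ≤ (1 / (4 * Real.pi)) *
        ((1 / cS mu ^ 2 + 2 / cP lam mu ^ 2) / ‖x - y‖
          + (2 * (kappaS mu om / cS mu ^ 2) *
              ((∑ l ∈ Finset.range (NOm lam mu om D), (kappaS mu om * D / 2) ^ l)
                + (2 : ℝ) ^ ((1 : ℤ) - (NOm lam mu om D : ℤ)))
            + (kappaP lam mu om / cP lam mu ^ 2) *
              ((∑ l ∈ Finset.range (NOm lam mu om D), (kappaP lam mu om * D / 2) ^ l)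
                + (2 : ℝ) ^ ((1 : ℤ) - (NOm lam mu om D : ℤ))))) := by
  have hκs : 0 ≤ kappaS mu om := div_nonneg hom.le (Real.sqrt_nonneg _)
  have hκp : 0 ≤ kappaP lam mu om := div_nonneg hom.le (Real.sqrt_nonneg _)
  refine (gamma_opNorm_bound_general lam mu om hmu (by linarith) hom x y hxy).trans ?_
  gcongr
  refine le_add_of_le_of_nonneg ?_ (by positivity)
  calc kappaS mu om / (6 * cS mu ^ 2) = 1 / 12 * (2 * (kappaS mu om / cS mu ^ 2)) := by ring
    _ ≤ _ := by
      rw [mul_comm]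
      gcongr
      exact le_trans (by norm_num) (one_le_geom_sum_add_zpow (by positivity) _)

end
end

section
/- Let D > 0 and set N := ⌊2D·max{κ_s, κ_p}·e²⌋. Then for all x, y ∈ ℝ³ with 0 < |x−y| ≤ D and every unit vector e ∈ ℝ³, the directional derivative of the Kupradze matrix in its first variable satisfies ‖D_x Γ^ω(x,y)[e]‖ ≤ (1/(4π))·[ C₉/|x−y|² + C₁₀ ], where C₉ := 3(1/c_s² + 1/c_p²) and C₁₀ := 2(ω²/c_s⁴)·( 1/8 + Σ_{l=0}^{N−1} (κ_s D/2)^l + 2^{1−N} ) + (ω²/c_p⁴)·( 1/4 + Σ_{l=0}^{N−1} (κ_p D/2)^l + 2^{1−N} ); here D_x Γ^ω(x,y)[e] denotes the 3×3 matrix with entries Σ_k e_k ∂/∂x_k Γ^ω(x,y)_{ij}. -/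
noncomputable section
open Real

/-- Directional derivative of `Γ^ω` in the first variable along `u`: the `3×3`
matrix with entries `Σ_k u_k ∂/∂x_k Γ^ω(x,y)_{ij}`. -/
def gradGammaMat (lam mu om : ℝ) (x y : E3) (u : E3) : Matrix (Fin 3) (Fin 3) ℂ :=
  Matrix.of fun i j =>
    ∑ k : Fin 3, ((u k : ℝ) : ℂ) *
      fderiv ℝ (fun x' : E3 => Gamma lam mu om x' y i j) x (EuclideanSpace.single k 1)

/-!
The radial function `exp (iκr) / r` is differentiated with the operator `r⁻¹ d/dr`. In terms of
`h = iκr` its iterates are `(h d/dh - 1)(h d/dh - 3) ⋯ eʰ / r ^ (2k + 1)`, and the operators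
`h d/dh - (2j + 1)` act diagonally on the Taylor series of `eʰ`. The leading Taylor terms do not
depend on `κ` and cancel in `Φ_{κ_s} - Φ_{κ_p}`; the terms in `κ² / r²` add up to `C₉`; the Taylor
remainders are at most a multiple of `κ⁴ exp (κr)`. Finally `exp (κD)` is split at the index `N`,
from which on `n! ≥ (n + 1) ^ n e ^ (-n-1)` makes its Taylor terms smaller than `2⁻ⁿ`; this gives
`C₁₀`.
-/

section TaylorSeries

open scoped Nat ContDiff

lemma iteratedDeriv_id_mul_deriv {𝕜 : Type*} [NontriviallyNormedField 𝕜] {f : 𝕜 → 𝕜}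
    (hf : ContDiff 𝕜 ∞ f) (n : ℕ) :
    iteratedDeriv n (fun z => z * deriv f z) =
      fun z => z * iteratedDeriv (n + 1) f z + n * iteratedDeriv n f z := by
  induction n with
  | zero => simp [iteratedDeriv_one]
  | succ n ih =>
    have hdiff (m : ℕ) : Differentiable 𝕜 (iteratedDeriv m f) :=
      hf.differentiable_iteratedDeriv m (mod_cast WithTop.coe_lt_top m)
    rw [iteratedDeriv_succ, ih]
    ext z
    have h := ((hasDerivAt_id z).fun_mul (hdiff (n + 1) z).hasDerivAt).fun_add
      ((hdiff n z).hasDerivAt.const_mul (n : 𝕜))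
    simp only [id_eq, ← iteratedDeriv_succ] at h
    rw [h.deriv]
    push_cast
    ring

lemma norm_sub_sum_range_le_mul_exp {𝕜 : Type*} [RCLike 𝕜] {a : ℕ → 𝕜} {z s : 𝕜} {K : ℝ} {m : ℕ}
    (hs : HasSum (fun n => a n * (z ^ n / n !)) s)
    (ha : ∀ n, ‖a (n + m)‖ ≤ K * (n + 1).ascFactorial m) :
    ‖s - ∑ n ∈ Finset.range m, a n * (z ^ n / n !)‖ ≤ K * ‖z‖ ^ m * exp ‖z‖ := by
  have hexp : HasSum (fun n : ℕ => ‖z‖ ^ n / n !) (exp ‖z‖) := by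
    simpa only [Real.exp_eq_exp_ℝ] using NormedSpace.expSeries_div_hasSum_exp ‖z‖
  refine ((hasSum_nat_add_iff' m).2 hs).norm_le_of_bounded (hexp.mul_left _) fun n => ?_
  have hfac : ((n + m)! : ℝ) = n ! * (n + 1).ascFactorial m := by
    exact_mod_cast (Nat.factorial_mul_ascFactorial n m).symm
  calc ‖a (n + m) * (z ^ (n + m) / (n + m)!)‖
      = ‖a (n + m)‖ * (‖z‖ ^ (n + m) / (n + m)!) := by simp
    _ ≤ K * (n + 1).ascFactorial m * (‖z‖ ^ (n + m) / (n + m)!) := by gcongr; exact ha n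
    _ = K * ‖z‖ ^ m * (‖z‖ ^ n / n !) := by rw [hfac]; field_simp; ring

end TaylorSeries

section BesselExp

open scoped Nat ContDiff

/-- `besselExp k h = θ_k(h) eʰ`, where `θ_k` is, up to signs, the `k`-th reverse Bessel polynomial:
`θ_0 = 1`, `θ_1 = h - 1`, `θ_2 = h² - 3h + 3`, `θ_3 = h³ - 6h² + 15h - 15`. It is defined by
applying the Euler operators `h d/dh - (2j + 1)`, `j < k`, to `exp`, as these are diagonal on
power series. -/
def besselExp : ℕ → ℂ → ℂ
  | 0 => Complex.exp
  | k + 1 => fun h => h * deriv (besselExp k) h - (2 * k + 1) * besselExp k h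

lemma contDiff_besselExp (k : ℕ) : ContDiff ℂ ∞ (besselExp k) := by
  induction k with
  | zero => exact Complex.contDiff_exp
  | succ k ih =>
    exact (contDiff_id.mul (contDiff_infty_iff_deriv.1 ih).2).sub (contDiff_const.mul ih)

lemma differentiable_besselExp (k : ℕ) : Differentiable ℂ (besselExp k) :=
  (contDiff_besselExp k).differentiable (by simp)

lemma iteratedDeriv_besselExp_zero (k n : ℕ) :
    iteratedDeriv n (besselExp k) 0 = ∏ j ∈ Finset.range k, ((n : ℂ) - (2 * j + 1)) := by
  induction k with
  | zero => simp [besselExp, iteratedDeriv_eq_iterate]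
  | succ k ih =>
    have hk := (contDiff_besselExp k).of_le (m := n) (mod_cast le_top)
    have hk' := ((contDiff_infty_iff_deriv.1 (contDiff_besselExp k)).2).of_le (m := n)
      (mod_cast le_top)
    rw [besselExp, iteratedDeriv_fun_sub (contDiff_fun_id.mul hk').contDiffAt
      (contDiff_const.mul hk).contDiffAt, iteratedDeriv_id_mul_deriv (contDiff_besselExp k),
      iteratedDeriv_const_mul_field]
    simp only [ih, Finset.prod_range_succ, zero_mul, zero_add]
    ring

lemma hasSum_besselExp (k : ℕ) (h : ℂ) :
    HasSum (fun n : ℕ => (∏ j ∈ Finset.range k, ((n : ℂ) - (2 * j + 1))) * (h ^ n / n !))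
      (besselExp k h) := by
  refine (Complex.hasSum_taylorSeries_of_entire (differentiable_besselExp k) 0 h).congr_fun
    fun n => ?_
  simp only [iteratedDeriv_besselExp_zero, sub_zero, smul_eq_mul]
  ring

lemma norm_besselExp_sub_sum_le {k m : ℕ} {K : ℝ}
    (hK : ∀ n : ℕ, |∏ j ∈ Finset.range k, ((n + m : ℝ) - (2 * j + 1))| ≤
      K * (n + 1).ascFactorial m) (h : ℂ) :
    ‖besselExp k h - ∑ n ∈ Finset.range m,
      (∏ j ∈ Finset.range k, ((n : ℂ) - (2 * j + 1))) * (h ^ n / n !)‖ ≤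
      K * ‖h‖ ^ m * exp ‖h‖ := by
  refine norm_sub_sum_range_le_mul_exp (hasSum_besselExp k h) fun n => ?_
  have hKn := hK n
  rw [← Real.norm_eq_abs, ← Complex.norm_real] at hKn
  push_cast at hKn ⊢
  exact hKn

lemma norm_besselExp_one_add_le (h : ℂ) :
    ‖besselExp 1 h + 1‖ ≤ 1 / 2 * ‖h‖ ^ 2 * exp ‖h‖ := by
  have hrem := norm_besselExp_sub_sum_le (k := 1) (m := 2) (K := 1 / 2) (fun n => by
    simp only [Finset.prod_range_one, Nat.ascFactorial]
    push_cast
    rw [abs_of_nonneg (by linarith)]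
    nlinarith) h
  simpa [Finset.sum_range_succ] using hrem

lemma norm_besselExp_two_sub_le (h : ℂ) :
    ‖besselExp 2 h - (3 - h ^ 2 / 2)‖ ≤ 1 / 8 * ‖h‖ ^ 4 * exp ‖h‖ := by
  have hrem := norm_besselExp_sub_sum_le (k := 2) (m := 4) (K := 1 / 8) (fun n => by
    have hn : (8 : ℝ) ≤ (n + 2) * (n + 4) := by nlinarith [(Nat.cast_nonneg n : (0 : ℝ) ≤ n)]
    calc |∏ j ∈ Finset.range 2, ((n + (4 : ℕ) : ℝ) - (2 * j + 1))|
        = (n + 3) * (n + 1) := by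
          simp only [Finset.prod_range_succ, Finset.prod_range_zero]
          push_cast
          rw [abs_of_nonneg] <;> ring_nf
          positivity
      _ ≤ (n + 3) * (n + 1) * ((n + 2) * (n + 4) / 8) :=
          le_mul_of_one_le_right (by positivity) (by linarith)
      _ = 1 / 8 * (n + 1).ascFactorial 4 := by simp only [Nat.ascFactorial]; push_cast; ring) h
  have htaylor : ∑ n ∈ Finset.range 4, (∏ j ∈ Finset.range 2, ((n : ℂ) - (2 * j + 1))) *
      (h ^ n / n !) = 3 - h ^ 2 / 2 := by
    simp only [Finset.sum_range_succ, Finset.sum_range_zero, Finset.prod_range_succ,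
      Finset.prod_range_zero, Nat.factorial]
    push_cast
    ring
  rwa [htaylor] at hrem

lemma norm_besselExp_three_sub_le (h : ℂ) :
    ‖besselExp 3 h - (-15 + 3 * h ^ 2 / 2)‖ ≤ 1 / 8 * ‖h‖ ^ 4 * exp ‖h‖ := by
  have hrem := norm_besselExp_sub_sum_le (k := 3) (m := 4) (K := 1 / 8) (fun n => by
    have hn : |(n : ℝ) - 1| ≤ (n + 2) * (n + 4) / 8 :=
      abs_le.2 ⟨by nlinarith [(Nat.cast_nonneg n : (0 : ℝ) ≤ n)], by nlinarith [sq_nonneg (n : ℝ)]⟩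
    calc |∏ j ∈ Finset.range 3, ((n + (4 : ℕ) : ℝ) - (2 * j + 1))|
        = (n + 3) * (n + 1) * |(n : ℝ) - 1| := by
          rw [← abs_of_nonneg (by positivity : (0 : ℝ) ≤ (n + 3) * (n + 1)), ← abs_mul]
          simp only [Finset.prod_range_succ, Finset.prod_range_zero]
          push_cast
          ring_nf
      _ ≤ (n + 3) * (n + 1) * ((n + 2) * (n + 4) / 8) := by gcongr
      _ = 1 / 8 * (n + 1).ascFactorial 4 := by simp only [Nat.ascFactorial]; push_cast; ring) h
  have htaylor : ∑ n ∈ Finset.range 4, (∏ j ∈ Finset.range 3, ((n : ℂ) - (2 * j + 1))) *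
      (h ^ n / n !) = -15 + 3 * h ^ 2 / 2 := by
    simp only [Finset.sum_range_succ, Finset.sum_range_zero, Finset.prod_range_succ,
      Finset.prod_range_zero, Nat.factorial]
    push_cast
    ring
  rwa [htaylor] at hrem

end BesselExp

section RadialCalculus

open scoped RealInnerProductSpace

variable {E : Type*} [NormedAddCommGroup E] [InnerProductSpace ℝ E]

/-- A sequence of radial profiles with `ρ (k + 1) = (r⁻¹ d/dr) ρ k` on `(0, ∞)`. The operator
`r⁻¹ d/dr` is what differentiation of `x ↦ ρ k ‖x - y‖` produces: the gradient is
`ρ (k + 1) ‖x - y‖ • (x - y)`. -/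
def IsRadialTower (ρ : ℕ → ℝ → ℂ) : Prop :=
  ∀ k r, 0 < r → HasDerivAt (ρ k) (r * ρ (k + 1) r) r

/-- The real inner product with `v`, as a complex-valued functional. -/
def innerC (v : E) : E →L[ℝ] ℂ := Complex.ofRealCLM ∘L innerSL ℝ v

lemma innerC_apply (v w : E) : innerC v w = ((⟪v, w⟫ : ℝ) : ℂ) := rfl

lemma hasFDerivAt_norm_sub {x y : E} (hxy : x ≠ y) :
    HasFDerivAt (fun x => ‖x - y‖) (‖x - y‖⁻¹ • innerSL ℝ (x - y)) x := by
  have hr : ‖x - y‖ ≠ 0 := norm_ne_zero_iff.2 (sub_ne_zero.2 hxy)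
  have hsqrt := ((hasFDerivAt_id x).sub_const y).norm_sq.sqrt (pow_ne_zero 2 hr)
  simp only [id_eq, Real.sqrt_sq (norm_nonneg _)] at hsqrt
  refine hsqrt.congr_fderiv ?_
  ext v
  simp only [one_div, mul_inv_rev, map_sub, ContinuousLinearMap.comp_id, smul_apply, sub_apply,
    coe_innerSL_apply, nsmul_eq_mul, Nat.cast_ofNat, smul_eq_mul]
  field_simp

lemma hasFDerivAt_ofReal_inner_sub (x y v : E) :
    HasFDerivAt (fun x => ((⟪x - y, v⟫ : ℝ) : ℂ)) (innerC v) x := by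
  simp only [real_inner_comm v, ← innerC_apply]
  exact (innerC v).hasFDerivAt.comp x ((hasFDerivAt_id x).sub_const y)

namespace IsRadialTower

variable {ρ σ : ℕ → ℝ → ℂ}

lemma const_mul (hρ : IsRadialTower ρ) (c : ℂ) : IsRadialTower fun k r => c * ρ k r :=
  fun k r hr => ((hρ k r hr).const_mul c).congr_deriv (by ring)

lemma sub (hρ : IsRadialTower ρ) (hσ : IsRadialTower σ) :
    IsRadialTower fun k r => ρ k r - σ k r :=
  fun k r hr => ((hρ k r hr).fun_sub (hσ k r hr)).congr_deriv (by ring)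

lemma hasFDerivAt_comp_norm_sub (hρ : IsRadialTower ρ) (k : ℕ) {x y : E} (hxy : x ≠ y) :
    HasFDerivAt (fun x => ρ k ‖x - y‖) (ρ (k + 1) ‖x - y‖ • innerC (x - y)) x := by
  have hr : 0 < ‖x - y‖ := norm_pos_iff.2 (sub_ne_zero.2 hxy)
  have hr' : (‖x - y‖ : ℂ) ≠ 0 := by exact_mod_cast hr.ne'
  refine ((hρ k _ hr).hasFDerivAt.comp x (hasFDerivAt_norm_sub hxy)).congr_fderiv ?_
  ext v
  simp only [map_sub, ContinuousLinearMap.comp_smulₛₗ, map_inv₀, ringHom_apply,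
    ContinuousLinearMap.comp_sub, smul_apply, sub_apply, ContinuousLinearMap.comp_apply,
    coe_innerSL_apply, ContinuousLinearMap.toSpanSingleton_apply, Complex.real_smul,
    Complex.ofReal_inv, innerC_apply, inner_sub_left, Complex.ofReal_sub, smul_eq_mul]
  field_simp

lemma fderiv_fderiv_apply (hρ : IsRadialTower ρ) {x y : E} (hxy : x ≠ y) (v w : E) :
    fderiv ℝ (fun x => fderiv ℝ (fun x => ρ 0 ‖x - y‖) x w) x v =
      ρ 1 ‖x - y‖ * ⟪v, w⟫ + ρ 2 ‖x - y‖ * (⟪x - y, v⟫ * ⟪x - y, w⟫) := by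
  have hgrad : (fun x => fderiv ℝ (fun x => ρ 0 ‖x - y‖) x w) =ᶠ[nhds x]
      fun x => ρ 1 ‖x - y‖ * ⟪x - y, w⟫ := by
    filter_upwards [isOpen_ne.mem_nhds hxy] with z hz
    rw [(hρ.hasFDerivAt_comp_norm_sub 0 hz).fderiv]
    rfl
  rw [hgrad.fderiv_eq,
    ((hρ.hasFDerivAt_comp_norm_sub 1 hxy).fun_mul (hasFDerivAt_ofReal_inner_sub x y w)).fderiv]
  simp only [add_apply, smul_apply, smul_eq_mul, innerC_apply, real_inner_comm v w]
  ring

lemma hasFDerivAt_hessian (hρ : IsRadialTower ρ) {x y : E} (hxy : x ≠ y) (v w : E) :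
    HasFDerivAt
      (fun x => ρ 1 ‖x - y‖ * ⟪v, w⟫ + ρ 2 ‖x - y‖ * (⟪x - y, v⟫ * ⟪x - y, w⟫))
      ((ρ 2 ‖x - y‖ * ⟪v, w⟫ + ρ 3 ‖x - y‖ * (⟪x - y, v⟫ * ⟪x - y, w⟫)) • innerC (x - y) +
        ρ 2 ‖x - y‖ • ((⟪x - y, v⟫ : ℂ) • innerC w + (⟪x - y, w⟫ : ℂ) • innerC v)) x := by
  refine (((hρ.hasFDerivAt_comp_norm_sub 1 hxy).mul_const (⟪v, w⟫ : ℂ)).fun_add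
    ((hρ.hasFDerivAt_comp_norm_sub 2 hxy).fun_mul ((hasFDerivAt_ofReal_inner_sub x y v).fun_mul
      (hasFDerivAt_ofReal_inner_sub x y w)))).congr_fderiv ?_
  ext u
  simp only [add_apply, smul_apply, smul_eq_mul]
  ring

end IsRadialTower

end RadialCalculus

section HelmholtzProfile

/-- The profiles `(r⁻¹ d/dr)ᵏ (exp (iκr) / r)`, in closed form. -/
def helmholtzProfile (κ : ℝ) (k : ℕ) (r : ℝ) : ℂ :=
  besselExp k (Complex.I * κ * r) / r ^ (2 * k + 1)

lemma Phi_eq_helmholtzProfile (κ : ℝ) (x y : E3) :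
    Phi κ x y = 1 / (4 * π) * helmholtzProfile κ 0 ‖x - y‖ := by
  simp only [Phi, helmholtzProfile, besselExp, mul_zero, zero_add, pow_one, div_mul_div_comm,
    one_mul]

lemma isRadialTower_helmholtzProfile (κ : ℝ) : IsRadialTower (helmholtzProfile κ) := by
  intro k r hr
  have hr' : (r : ℂ) ≠ 0 := by exact_mod_cast hr.ne'
  have hphase : HasDerivAt (fun r : ℝ => Complex.I * κ * (r : ℂ)) (Complex.I * κ) r := by
    simpa using (Complex.ofRealCLM.hasDerivAt (x := r)).const_mul (Complex.I * (κ : ℂ))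
  have hpow : HasDerivAt (fun r : ℝ => (r : ℂ) ^ (2 * k + 1))
      ((2 * k + 1) * (r : ℂ) ^ (2 * k)) r := by
    simpa using (Complex.ofRealCLM.hasDerivAt (x := r)).fun_pow (2 * k + 1)
  refine (((differentiable_besselExp k _).hasDerivAt.comp r hphase).div hpow
    (pow_ne_zero _ hr')).congr_deriv ?_
  simp only [helmholtzProfile, besselExp, Function.comp_apply]
  field_simp
  ring

/-- The profiles `(r⁻¹ d/dr)ᵏ ((exp (iκr) - exp (iκ'r)) / r)`. -/
def helmholtzDiff (κ κ' : ℝ) (k : ℕ) (r : ℝ) : ℂ :=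
  helmholtzProfile κ k r - helmholtzProfile κ' k r

lemma Phi_sub_Phi_eq_helmholtzDiff (κ κ' : ℝ) (x y : E3) :
    Phi κ x y - Phi κ' x y = 1 / (4 * π) * helmholtzDiff κ κ' 0 ‖x - y‖ := by
  rw [Phi_eq_helmholtzProfile, Phi_eq_helmholtzProfile, helmholtzDiff, mul_sub]

lemma isRadialTower_helmholtzDiff (κ κ' : ℝ) : IsRadialTower (helmholtzDiff κ κ') :=
  (isRadialTower_helmholtzProfile κ).sub (isRadialTower_helmholtzProfile κ')

section Bounds

variable {κ κ' r : ℝ}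

lemma norm_I_mul_mul (hκ : 0 ≤ κ) (hr : 0 ≤ r) : ‖Complex.I * κ * r‖ = κ * r := by
  rw [norm_mul, norm_mul, Complex.norm_I, one_mul, Complex.norm_of_nonneg hκ,
    Complex.norm_of_nonneg hr]

lemma norm_ofReal_sq_sub_sq_div_le (hr : 0 ≤ r) (a b : ℝ) :
    ‖(((a ^ 2 - b ^ 2) / r : ℝ) : ℂ)‖ ≤ (a ^ 2 + b ^ 2) / r := by
  rw [Complex.norm_real, norm_div, Real.norm_of_nonneg hr, Real.norm_eq_abs]
  gcongr
  exact abs_le.2 ⟨by linarith [sq_nonneg a], by linarith [sq_nonneg b]⟩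

lemma norm_mul_helmholtzProfile_one_add_le (hκ : 0 ≤ κ) (hr : 0 < r) :
    ‖r * (κ ^ 2 * helmholtzProfile κ 1 r) + κ ^ 2 / r ^ 2‖ ≤ κ ^ 4 * exp (κ * r) / 2 := by
  have hform : r * (κ ^ 2 * helmholtzProfile κ 1 r) + κ ^ 2 / r ^ 2 =
      ((κ ^ 2 / r ^ 2 : ℝ) : ℂ) * (besselExp 1 (Complex.I * κ * r) + 1) := by
    simp only [helmholtzProfile]
    push_cast
    field_simp
  have hrem := norm_besselExp_one_add_le (Complex.I * κ * r)
  rw [norm_I_mul_mul hκ hr.le] at hrem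
  rw [hform, norm_mul, Complex.norm_real, Real.norm_of_nonneg (by positivity)]
  calc _ ≤ κ ^ 2 / r ^ 2 * (1 / 2 * (κ * r) ^ 2 * exp (κ * r)) := by gcongr
    _ = κ ^ 4 * exp (κ * r) / 2 := by field_simp

lemma norm_mul_helmholtzProfile_two_sub_le (hκ : 0 ≤ κ) (hr : 0 < r) :
    ‖r * helmholtzProfile κ 2 r - (3 / r ^ 4 + κ ^ 2 / (2 * r ^ 2))‖ ≤
      κ ^ 4 * exp (κ * r) / 8 := by
  have hr' : (r : ℂ) ≠ 0 := by exact_mod_cast hr.ne'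
  have hform : r * helmholtzProfile κ 2 r - (3 / r ^ 4 + κ ^ 2 / (2 * r ^ 2)) =
      (besselExp 2 (Complex.I * κ * r) - (3 - (Complex.I * κ * r) ^ 2 / 2)) / (r : ℂ) ^ 4 := by
    simp only [helmholtzProfile, mul_pow, Complex.I_sq]
    field_simp
    ring
  have hrem := norm_besselExp_two_sub_le (Complex.I * κ * r)
  rw [norm_I_mul_mul hκ hr.le] at hrem
  rw [hform, norm_div, norm_pow, Complex.norm_of_nonneg hr.le, div_le_iff₀ (by positivity)]
  exact hrem.trans_eq (by ring)

lemma norm_mul_helmholtzProfile_three_add_le (hκ : 0 ≤ κ) (hr : 0 < r) :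
    ‖r ^ 3 * helmholtzProfile κ 3 r + (15 / r ^ 4 + 3 * κ ^ 2 / (2 * r ^ 2))‖ ≤
      κ ^ 4 * exp (κ * r) / 8 := by
  have hr' : (r : ℂ) ≠ 0 := by exact_mod_cast hr.ne'
  have hform : r ^ 3 * helmholtzProfile κ 3 r + (15 / r ^ 4 + 3 * κ ^ 2 / (2 * r ^ 2)) =
      (besselExp 3 (Complex.I * κ * r) - (-15 + 3 * (Complex.I * κ * r) ^ 2 / 2)) /
        (r : ℂ) ^ 4 := by
    simp only [helmholtzProfile, mul_pow, Complex.I_sq]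
    field_simp
    ring
  have hrem := norm_besselExp_three_sub_le (Complex.I * κ * r)
  rw [norm_I_mul_mul hκ hr.le] at hrem
  rw [hform, norm_div, norm_pow, Complex.norm_of_nonneg hr.le, div_le_iff₀ (by positivity)]
  exact hrem.trans_eq (by ring)

lemma mul_norm_add_helmholtzDiff_two_le (hκ : 0 ≤ κ) (hκ' : 0 ≤ κ') (hr : 0 < r) :
    r * ‖κ ^ 2 * helmholtzProfile κ 1 r + helmholtzDiff κ κ' 2 r‖ ≤
      (κ ^ 2 + κ' ^ 2) / (2 * r ^ 2) +
        (5 * (κ ^ 4 * exp (κ * r)) + κ' ^ 4 * exp (κ' * r)) / 8 := by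
  have hr' : (r : ℂ) ≠ 0 := by exact_mod_cast hr.ne'
  have hsplit : r * (κ ^ 2 * helmholtzProfile κ 1 r + helmholtzDiff κ κ' 2 r) =
        (r * (κ ^ 2 * helmholtzProfile κ 1 r) + κ ^ 2 / r ^ 2) +
        (r * helmholtzProfile κ 2 r - (3 / r ^ 4 + κ ^ 2 / (2 * r ^ 2))) -
        (r * helmholtzProfile κ' 2 r - (3 / r ^ 4 + κ' ^ 2 / (2 * r ^ 2))) -
        (((κ ^ 2 + κ' ^ 2) / (2 * r ^ 2) : ℝ) : ℂ) := by
    simp only [helmholtzDiff]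
    push_cast
    field_simp
    ring
  have hlead : ‖(((κ ^ 2 + κ' ^ 2) / (2 * r ^ 2) : ℝ) : ℂ)‖ = (κ ^ 2 + κ' ^ 2) / (2 * r ^ 2) :=
    Complex.norm_of_nonneg (by positivity)
  calc _ = ‖r * (κ ^ 2 * helmholtzProfile κ 1 r + helmholtzDiff κ κ' 2 r)‖ := by
        rw [norm_mul, Complex.norm_of_nonneg hr.le]
    _ ≤ κ ^ 4 * exp (κ * r) / 2 + κ ^ 4 * exp (κ * r) / 8 + κ' ^ 4 * exp (κ' * r) / 8 +
        (κ ^ 2 + κ' ^ 2) / (2 * r ^ 2) := by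
      rw [hsplit]
      exact norm_sub_le_of_le (norm_sub_le_of_le (norm_add_le_of_le
        (norm_mul_helmholtzProfile_one_add_le hκ hr) (norm_mul_helmholtzProfile_two_sub_le hκ hr))
        (norm_mul_helmholtzProfile_two_sub_le hκ' hr)) hlead.le
    _ = _ := by ring

lemma mul_norm_helmholtzDiff_two_le (hκ : 0 ≤ κ) (hκ' : 0 ≤ κ') (hr : 0 < r) :
    r * ‖helmholtzDiff κ κ' 2 r‖ ≤
      (κ ^ 2 + κ' ^ 2) / (2 * r ^ 2) + (κ ^ 4 * exp (κ * r) + κ' ^ 4 * exp (κ' * r)) / 8 := by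
  have hsplit : r * helmholtzDiff κ κ' 2 r =
      (r * helmholtzProfile κ 2 r - (3 / r ^ 4 + κ ^ 2 / (2 * r ^ 2))) -
      (r * helmholtzProfile κ' 2 r - (3 / r ^ 4 + κ' ^ 2 / (2 * r ^ 2))) +
      (((κ ^ 2 - κ' ^ 2) / (2 * r ^ 2) : ℝ) : ℂ) := by
    simp only [helmholtzDiff]
    push_cast
    ring
  have hlead : ‖(((κ ^ 2 - κ' ^ 2) / (2 * r ^ 2) : ℝ) : ℂ)‖ ≤ (κ ^ 2 + κ' ^ 2) / (2 * r ^ 2) :=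
    norm_ofReal_sq_sub_sq_div_le (by positivity) κ κ'
  calc _ = ‖r * helmholtzDiff κ κ' 2 r‖ := by
        rw [norm_mul, Complex.norm_of_nonneg hr.le]
    _ ≤ κ ^ 4 * exp (κ * r) / 8 + κ' ^ 4 * exp (κ' * r) / 8 + (κ ^ 2 + κ' ^ 2) / (2 * r ^ 2) := by
      rw [hsplit]
      exact norm_add_le_of_le (norm_sub_le_of_le (norm_mul_helmholtzProfile_two_sub_le hκ hr)
        (norm_mul_helmholtzProfile_two_sub_le hκ' hr)) hlead
    _ = _ := by ring

lemma mul_norm_helmholtzDiff_three_le (hκ : 0 ≤ κ) (hκ' : 0 ≤ κ') (hr : 0 < r) :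
    r ^ 3 * ‖helmholtzDiff κ κ' 3 r‖ ≤
      3 * ((κ ^ 2 + κ' ^ 2) / (2 * r ^ 2)) +
        (κ ^ 4 * exp (κ * r) + κ' ^ 4 * exp (κ' * r)) / 8 := by
  have hsplit : r ^ 3 * helmholtzDiff κ κ' 3 r =
      (r ^ 3 * helmholtzProfile κ 3 r + (15 / r ^ 4 + 3 * κ ^ 2 / (2 * r ^ 2))) -
      (r ^ 3 * helmholtzProfile κ' 3 r + (15 / r ^ 4 + 3 * κ' ^ 2 / (2 * r ^ 2))) -
      3 * (((κ ^ 2 - κ' ^ 2) / (2 * r ^ 2) : ℝ) : ℂ) := by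
    simp only [helmholtzDiff]
    push_cast
    ring
  have hlead : ‖3 * (((κ ^ 2 - κ' ^ 2) / (2 * r ^ 2) : ℝ) : ℂ)‖ ≤
      3 * ((κ ^ 2 + κ' ^ 2) / (2 * r ^ 2)) := by
    rw [norm_mul, Complex.norm_ofNat]
    gcongr
    exact norm_ofReal_sq_sub_sq_div_le (by positivity) κ κ'
  calc _ = ‖r ^ 3 * helmholtzDiff κ κ' 3 r‖ := by
        rw [norm_mul, norm_pow, Complex.norm_of_nonneg hr.le]
    _ ≤ κ ^ 4 * exp (κ * r) / 8 + κ' ^ 4 * exp (κ' * r) / 8 +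
        3 * ((κ ^ 2 + κ' ^ 2) / (2 * r ^ 2)) := by
      rw [hsplit]
      exact norm_sub_le_of_le (norm_sub_le_of_le (norm_mul_helmholtzProfile_three_add_le hκ hr)
        (norm_mul_helmholtzProfile_three_add_le hκ' hr)) hlead
    _ = _ := by ring

end Bounds

end HelmholtzProfile

section OuterProduct

open scoped Matrix.Norms.L2Operator RealInnerProductSpace

variable {n : Type*} [Fintype n]

/-- The outer product `x yᵀ` of two real vectors, as a complex matrix. -/
def outerC (x y : EuclideanSpace ℝ n) : Matrix n n ℂ :=
  (Matrix.vecMulVec x.ofLp y.ofLp).map Complex.ofReal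

lemma norm_toLp_ofReal (x : EuclideanSpace ℝ n) :
    ‖WithLp.toLp 2 fun i => (x i : ℂ)‖ = ‖x‖ := by
  simp only [EuclideanSpace.norm_eq, Complex.norm_real]

lemma norm_outerC [DecidableEq n] (x y : EuclideanSpace ℝ n) : ‖outerC x y‖ = ‖x‖ * ‖y‖ := by
  have hrank : outerC x y = Matrix.toEuclideanLin.symm (InnerProductSpace.rankOne ℂ
      (WithLp.toLp 2 fun i => (x i : ℂ)) (WithLp.toLp 2 fun i => (y i : ℂ))).toLinearMap := by
    rw [InnerProductSpace.symm_toEuclideanLin_rankOne]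
    ext i j
    simp [outerC, Matrix.vecMulVec_apply]
  rw [hrank, Matrix.l2_opNorm_def, LinearEquiv.trans_apply, LinearEquiv.apply_symm_apply,
    ← norm_toLp_ofReal x, ← norm_toLp_ofReal y]
  exact InnerProductSpace.norm_rankOne _ _

lemma norm_add_outerC_le [DecidableEq n] [Nonempty n] (a b c : ℂ) (x u : EuclideanSpace ℝ n) :
    ‖(⟪x, u⟫ : ℂ) • (a • (1 : Matrix n n ℂ) + c • outerC x x) + b • (outerC u x + outerC x u)‖ ≤
      (‖x‖ * ‖a‖ + 2 * (‖x‖ * ‖b‖) + ‖x‖ ^ 3 * ‖c‖) * ‖u‖ := by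
  have hinner : ‖(⟪x, u⟫ : ℂ)‖ ≤ ‖x‖ * ‖u‖ := by
    simpa only [Complex.norm_real] using norm_inner_le_norm x u
  have hdiag : ‖a • (1 : Matrix n n ℂ) + c • outerC x x‖ ≤ ‖a‖ + ‖c‖ * (‖x‖ * ‖x‖) :=
    norm_add_le_of_le (by rw [norm_smul, norm_one, mul_one]) (by rw [norm_smul, norm_outerC])
  have hoff : ‖outerC u x + outerC x u‖ ≤ ‖u‖ * ‖x‖ + ‖x‖ * ‖u‖ :=
    norm_add_le_of_le (norm_outerC u x).le (norm_outerC x u).le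
  calc _ ≤ ‖x‖ * ‖u‖ * (‖a‖ + ‖c‖ * (‖x‖ * ‖x‖)) + ‖b‖ * (‖u‖ * ‖x‖ + ‖x‖ * ‖u‖) := by
        refine norm_add_le_of_le ?_ ?_ <;> rw [norm_smul] <;> gcongr
    _ = _ := by ring

end OuterProduct

section KupradzeMatrix

open scoped Matrix.Norms.L2Operator RealInnerProductSpace

lemma opNorm3_eq_norm (A : Matrix (Fin 3) (Fin 3) ℂ) : opNorm3 A = ‖A‖ := rfl

variable {lam mu om : ℝ} {x y : E3}

lemma kappaS_pos (hmu : 0 < mu) (hom : 0 < om) : 0 < kappaS mu om :=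
  div_pos hom (Real.sqrt_pos.2 hmu)

lemma kappaP_pos (hlam : 0 < lam + 2 * mu) (hom : 0 < om) : 0 < kappaP lam mu om :=
  div_pos hom (Real.sqrt_pos.2 hlam)

lemma one_div_eq_kappaS_sq_div (hmu : 0 < mu) (hom : 0 < om) :
    (1 / mu : ℂ) = kappaS mu om ^ 2 / om ^ 2 := by
  have hreal : 1 / mu = kappaS mu om ^ 2 / om ^ 2 := by
    rw [kappaS, cS, div_pow, Real.sq_sqrt hmu.le]
    field_simp
  exact_mod_cast congrArg Complex.ofReal hreal

lemma Gamma_eq_of_ne (hmu : 0 < mu) (hom : 0 < om) (hxy : x ≠ y) (i j : Fin 3) :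
    _root_.Gamma lam mu om x y i j = 1 / (4 * π * om ^ 2) *
      (kappaS mu om ^ 2 * helmholtzProfile (kappaS mu om) 0 ‖x - y‖ * (if i = j then 1 else 0) +
        (helmholtzDiff (kappaS mu om) (kappaP lam mu om) 1 ‖x - y‖ *
            ⟪EuclideanSpace.single i (1 : ℝ), EuclideanSpace.single j 1⟫ +
          helmholtzDiff (kappaS mu om) (kappaP lam mu om) 2 ‖x - y‖ *
            (⟪x - y, EuclideanSpace.single i 1⟫ * ⟪x - y, EuclideanSpace.single j 1⟫))) := by
  have htower :=
    (isRadialTower_helmholtzDiff (kappaS mu om) (kappaP lam mu om)).const_mul (1 / (4 * π))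
  simp only [_root_.Gamma, Phi_sub_Phi_eq_helmholtzDiff]
  rw [htower.fderiv_fderiv_apply hxy, Phi_eq_helmholtzProfile, one_div_eq_kappaS_sq_div hmu hom]
  ring

lemma fderiv_Gamma_apply (hmu : 0 < mu) (hom : 0 < om) (hxy : x ≠ y) (u : E3) (i j : Fin 3) :
    fderiv ℝ (fun x => _root_.Gamma lam mu om x y i j) x u = 1 / (4 * π * om ^ 2) *
      (⟪x - y, u⟫ * ((kappaS mu om ^ 2 * helmholtzProfile (kappaS mu om) 1 ‖x - y‖ +
          helmholtzDiff (kappaS mu om) (kappaP lam mu om) 2 ‖x - y‖) *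
            (if i = j then 1 else 0) +
          helmholtzDiff (kappaS mu om) (kappaP lam mu om) 3 ‖x - y‖ *
            ((x - y) i * (x - y) j)) +
        helmholtzDiff (kappaS mu om) (kappaP lam mu om) 2 ‖x - y‖ *
          (u i * (x - y) j + (x - y) i * u j)) := by
  have hS := isRadialTower_helmholtzProfile (kappaS mu om)
  have hdiff := isRadialTower_helmholtzDiff (kappaS mu om) (kappaP lam mu om)
  have hGamma := (eventually_ne_nhds hxy).mono fun z hz =>
    Gamma_eq_of_ne (lam := lam) hmu hom hz i j
  have hderiv := ((((hS.hasFDerivAt_comp_norm_sub 0 hxy).const_mul (kappaS mu om ^ 2 : ℂ)).mul_const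
    (if i = j then (1 : ℂ) else 0)).fun_add (hdiff.hasFDerivAt_hessian hxy
      (EuclideanSpace.single i 1) (EuclideanSpace.single j 1))).const_mul (1 / (4 * π * om ^ 2) : ℂ)
  rw [Filter.EventuallyEq.fderiv_eq hGamma, hderiv.fderiv]
  simp only [add_apply, smul_apply, smul_eq_mul, innerC_apply, EuclideanSpace.inner_single_left,
    EuclideanSpace.inner_single_right, map_one, one_mul, PiLp.single_apply, conj_trivial,
    eq_comm (a := j)]
  split_ifs <;> push_cast <;> ring

lemma gradGammaMat_apply (u : E3) (i j : Fin 3) :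
    gradGammaMat lam mu om x y u i j =
      fderiv ℝ (fun x => _root_.Gamma lam mu om x y i j) x u := by
  have hbasis : u = ∑ k, u k • EuclideanSpace.single k (1 : ℝ) := by
    ext k
    simp [Pi.single_apply]
  conv_rhs => rw [hbasis, map_sum]
  simp only [gradGammaMat, Matrix.of_apply, map_smul, Complex.real_smul]

lemma gradGammaMat_eq_of_ne (hmu : 0 < mu) (hom : 0 < om) (hxy : x ≠ y) (u : E3) :
    gradGammaMat lam mu om x y u = (1 / (4 * π * om ^ 2) : ℂ) •
      ((⟪x - y, u⟫ : ℂ) • ((kappaS mu om ^ 2 * helmholtzProfile (kappaS mu om) 1 ‖x - y‖ +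
          helmholtzDiff (kappaS mu om) (kappaP lam mu om) 2 ‖x - y‖) •
            (1 : Matrix (Fin 3) (Fin 3) ℂ) +
          helmholtzDiff (kappaS mu om) (kappaP lam mu om) 3 ‖x - y‖ • outerC (x - y) (x - y)) +
        helmholtzDiff (kappaS mu om) (kappaP lam mu om) 2 ‖x - y‖ •
          (outerC u (x - y) + outerC (x - y) u)) := by
  ext i j
  rw [gradGammaMat_apply, fderiv_Gamma_apply hmu hom hxy]
  simp only [outerC, Matrix.smul_apply, Matrix.add_apply, Matrix.one_apply, Matrix.map_apply,
    Matrix.vecMulVec_apply, smul_eq_mul, Complex.ofReal_mul]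

lemma opNorm3_gradGammaMat_le (hmu : 0 < mu) (hlam : 0 < lam + 2 * mu) (hom : 0 < om)
    (hxy : x ≠ y) (u : E3) :
    opNorm3 (gradGammaMat lam mu om x y u) ≤ 1 / (4 * π * om ^ 2) *
      (3 * (kappaS mu om ^ 2 + kappaP lam mu om ^ 2) / ‖x - y‖ ^ 2 +
        (kappaS mu om ^ 4 * exp (kappaS mu om * ‖x - y‖) +
          kappaP lam mu om ^ 4 * exp (kappaP lam mu om * ‖x - y‖) / 2)) * ‖u‖ := by
  have hr : 0 < ‖x - y‖ := norm_pos_iff.2 (sub_ne_zero.2 hxy)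
  have hs := (kappaS_pos hmu hom).le
  have hp := (kappaP_pos hlam hom).le
  have hscale : ‖(1 / (4 * π * om ^ 2) : ℂ)‖ = 1 / (4 * π * om ^ 2) := by
    have hnorm := Complex.norm_of_nonneg (show 0 ≤ 1 / (4 * π * om ^ 2) by positivity)
    push_cast at hnorm
    exact hnorm
  rw [opNorm3_eq_norm, gradGammaMat_eq_of_ne hmu hom hxy, norm_smul, hscale, mul_assoc (1 / _)]
  refine mul_le_mul_of_nonneg_left ((norm_add_outerC_le _ _ _ (x - y) u).trans ?_) (by positivity)
  refine mul_le_mul_of_nonneg_right ?_ (norm_nonneg u)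
  calc _ ≤ _ := add_le_add_three (mul_norm_add_helmholtzDiff_two_le hs hp hr)
        (mul_le_mul_of_nonneg_left (mul_norm_helmholtzDiff_two_le hs hp hr) zero_le_two)
        (mul_norm_helmholtzDiff_three_le hs hp hr)
    _ = _ := by ring

end KupradzeMatrix

section ExpTruncation

open scoped Nat

lemma two_pow_le_two_mul_factorial (n : ℕ) : 2 ^ n ≤ 2 * n ! := by
  cases n with
  | zero => simp
  | succ n =>
    rw [pow_succ']
    gcongr
    simpa [add_comm] using Nat.factorial_mul_pow_le_factorial (m := 1) (n := n)

lemma pow_div_factorial_le_two_mul_half_pow {Z : ℝ} (hZ : 0 ≤ Z) (n : ℕ) :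
    Z ^ n / n ! ≤ 2 * (Z / 2) ^ n := by
  have h2 : (2 : ℝ) ^ n ≤ 2 * n ! := by exact_mod_cast two_pow_le_two_mul_factorial n
  rw [div_pow, mul_div_assoc', div_le_div_iff₀ (by positivity) (by positivity)]
  nlinarith [pow_nonneg hZ n]

lemma pow_div_factorial_le_half_pow {Z : ℝ} {n : ℕ} (hZ : 0 ≤ Z)
    (hn : 2 * Z * exp 1 ^ 2 ≤ n + 1) : Z ^ n / n ! ≤ (1 / 2) ^ n := by
  rcases n.eq_zero_or_pos with rfl | hpos
  · simp
  have hexp : exp (n + 1) ≤ (exp 1 ^ 2) ^ n := by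
    have hpos' : (1 : ℝ) ≤ n := by exact_mod_cast hpos
    rw [← pow_mul, ← Real.exp_nat_mul, Real.exp_le_exp]
    push_cast
    linarith
  have hstirling : (2 * Z * exp 1 ^ 2) ^ n / n ! ≤ (exp 1 ^ 2) ^ n :=
    calc (2 * Z * exp 1 ^ 2) ^ n / n ! ≤ (n + 1) ^ n / n ! := by gcongr
      _ ≤ exp (n + 1) := Real.pow_div_factorial_le_exp _ (by positivity) n
      _ ≤ (exp 1 ^ 2) ^ n := hexp
  have hdouble : (2 * Z) ^ n / n ! ≤ 1 := by
    rwa [mul_pow, mul_div_right_comm, mul_le_iff_le_one_left (by positivity)] at hstirling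
  calc Z ^ n / n ! = (1 / 2) ^ n * ((2 * Z) ^ n / n !) := by
        rw [mul_pow, one_div, inv_pow]
        field_simp
    _ ≤ (1 / 2) ^ n := mul_le_of_le_one_right (by positivity) hdouble

lemma exp_le_two_mul_sum_add_zpow {Z : ℝ} {N : ℕ} (hZ : 0 ≤ Z) (hN : 2 * Z * exp 1 ^ 2 ≤ N + 1) :
    exp Z ≤ 2 * ∑ l ∈ Finset.range N, (Z / 2) ^ l + 2 ^ (1 - N : ℤ) := by
  have hexp : HasSum (fun n : ℕ => Z ^ n / n !) (exp Z) := by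
    simpa only [Real.exp_eq_exp_ℝ] using NormedSpace.expSeries_div_hasSum_exp Z
  have htail : exp Z - ∑ l ∈ Finset.range N, Z ^ l / l ! ≤ (1 / 2) ^ N * 2 :=
    hasSum_le (fun n => (pow_div_factorial_le_half_pow hZ (by push_cast; linarith)).trans_eq
      (by rw [pow_add, mul_comm])) ((hasSum_nat_add_iff' N).2 hexp)
      (hasSum_geometric_two.mul_left ((1 / 2 : ℝ) ^ N))
  have hhead : ∑ l ∈ Finset.range N, Z ^ l / l ! ≤ 2 * ∑ l ∈ Finset.range N, (Z / 2) ^ l := by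
    rw [Finset.mul_sum]
    exact Finset.sum_le_sum fun n _ => pow_div_factorial_le_two_mul_half_pow hZ n
  have hpow : (2 : ℝ) ^ (1 - N : ℤ) = (1 / 2) ^ N * 2 := by
    rw [zpow_sub₀ two_ne_zero, zpow_one, zpow_natCast, one_div, inv_pow]
    ring
  linarith

lemma exp_mul_le_two_mul_sum_add_zpow_NOm {lam mu om D κ : ℝ} (hκ : 0 ≤ κ) (hD : 0 ≤ D)
    (hmax : κ ≤ max (kappaS mu om) (kappaP lam mu om)) :
    exp (κ * D) ≤ 2 * ∑ l ∈ Finset.range (NOm lam mu om D), (κ * D / 2) ^ l +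
      2 ^ (1 - NOm lam mu om D : ℤ) := by
  refine exp_le_two_mul_sum_add_zpow (mul_nonneg hκ hD) ?_
  calc 2 * (κ * D) * exp 1 ^ 2 = 2 * D * κ * exp 1 ^ 2 := by ring
    _ ≤ 2 * D * max (kappaS mu om) (kappaP lam mu om) * exp 1 ^ 2 := by gcongr
    _ ≤ NOm lam mu om D + 1 := (Nat.lt_floor_add_one _).le

end ExpTruncation

theorem grad_gamma_opNorm_bound_general (lam mu om D : ℝ) (hmu : 0 < mu)
    (hlam : 0 < lam + 2 * mu) (hom : 0 < om) (x y : E3) (hxy : x ≠ y) (hle : ‖x - y‖ ≤ D)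
    (u : E3) :
    opNorm3 (gradGammaMat lam mu om x y u)
      ≤ (1 / (4 * Real.pi)) *
        ((3 * (1 / cS mu ^ 2 + 1 / cP lam mu ^ 2)) / ‖x - y‖ ^ 2
          + (2 * (om ^ 2 / cS mu ^ 4) *
              (1 / 8
                + (∑ l ∈ Finset.range (NOm lam mu om D), (kappaS mu om * D / 2) ^ l)
                + (2 : ℝ) ^ ((1 : ℤ) - (NOm lam mu om D : ℤ)))
            + (om ^ 2 / cP lam mu ^ 4) *
              (1 / 4
                + (∑ l ∈ Finset.range (NOm lam mu om D), (kappaP lam mu om * D / 2) ^ l)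
                + (2 : ℝ) ^ ((1 : ℤ) - (NOm lam mu om D : ℤ))))) * ‖u‖ := by
  have hs := (kappaS_pos hmu hom).le
  have hp := (kappaP_pos hlam hom).le
  have hD : 0 ≤ D := (norm_nonneg _).trans hle
  have hexpS := (Real.exp_le_exp.2 (mul_le_mul_of_nonneg_left hle hs)).trans
    (exp_mul_le_two_mul_sum_add_zpow_NOm (lam := lam) hs hD (le_max_left _ _))
  have hexpP := (Real.exp_le_exp.2 (mul_le_mul_of_nonneg_left hle hp)).trans
    (exp_mul_le_two_mul_sum_add_zpow_NOm hp hD (le_max_right (kappaS mu om) _))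
  have hsq (c : ℝ) : 1 / c ^ 2 = (om / c) ^ 2 / om ^ 2 := by field_simp
  have hquart (c : ℝ) : om ^ 2 / c ^ 4 = (om / c) ^ 4 / om ^ 2 := by field_simp
  have hpow : (0 : ℝ) < 2 ^ (1 - NOm lam mu om D : ℤ) := by positivity
  simp only [hsq, hquart, ← kappaS.eq_1, ← kappaP.eq_1]
  refine (opNorm3_gradGammaMat_le hmu hlam hom hxy u).trans ?_
  calc _ ≤ 1 / (4 * π * om ^ 2) *
        (3 * (kappaS mu om ^ 2 + kappaP lam mu om ^ 2) / ‖x - y‖ ^ 2 +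
          (kappaS mu om ^ 4 * (2 * (1 / 8 +
              ∑ l ∈ Finset.range (NOm lam mu om D), (kappaS mu om * D / 2) ^ l +
              2 ^ (1 - NOm lam mu om D : ℤ))) +
            kappaP lam mu om ^ 4 * (2 * (1 / 4 +
              ∑ l ∈ Finset.range (NOm lam mu om D), (kappaP lam mu om * D / 2) ^ l +
              2 ^ (1 - NOm lam mu om D : ℤ))) / 2)) * ‖u‖ := by
        gcongr <;> linarith
    _ = _ := by ring

/-- The gradient estimate (gradkupradzeten1dfnt): for `0 < |x−y| ≤ D` and a
unit vector `u`, `‖D_xΓ^ω(x,y)[u]‖ ≤ (1/(4π))(C₉/|x−y|² + C₁₀)` with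
`C₉ = 3(1/c_s² + 1/c_p²)` and
`C₁₀ = 2(ω²/c_s⁴)(1/8 + Σ_{l<N}(κ_s D/2)^l + 2^{1−N}) + (ω²/c_p⁴)(1/4 + Σ_{l<N}(κ_p D/2)^l + 2^{1−N})`. -/
theorem grad_gamma_opNorm_bound (lam mu om D : ℝ) (hmu : 0 < mu)
    (hlm : 0 < 3 * lam + 2 * mu) (hom : 0 < om) (hD : 0 < D)
    (x y : E3) (hxy : x ≠ y) (hle : ‖x - y‖ ≤ D)
    (u : E3) (hu : ‖u‖ = 1) :
    opNorm3 (gradGammaMat lam mu om x y u)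
      ≤ (1 / (4 * Real.pi)) *
        ((3 * (1 / cS mu ^ 2 + 1 / cP lam mu ^ 2)) / ‖x - y‖ ^ 2
          + (2 * (om ^ 2 / cS mu ^ 4) *
              (1 / 8
                + (∑ l ∈ Finset.range (NOm lam mu om D), (kappaS mu om * D / 2) ^ l)
                + (2 : ℝ) ^ ((1 : ℤ) - (NOm lam mu om D : ℤ)))
            + (om ^ 2 / cP lam mu ^ 4) *
              (1 / 4
                + (∑ l ∈ Finset.range (NOm lam mu om D), (kappaP lam mu om * D / 2) ^ l)
                + (2 : ℝ) ^ ((1 : ℤ) - (NOm lam mu om D : ℤ))))) := by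
  have hlam : 0 < lam + 2 * mu := by linarith
  simpa only [hu, mul_one] using
    grad_gamma_opNorm_bound_general lam mu om D hmu hlam hom x y hxy hle u

end
end
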